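/- arXiv:2402.07882 — 3 statements merged into one kernel-verified Lean document; each statement's English description precedes it below -/
import Mathlib

section
/- Let V be a finite-dimensional F-vector space, Q a nondegenerate quadratic form on V with Witt index w, and G a generator of Q (a totally singular subspace of dimension w). Let X be a subspace of V with G ⊆ X, dim X = w + 1, and X not contained in G^⊥. Then X contains a generator of Q distinct from G. -/
open Module Submodule

section Defs

variable {F : Type*} [Field F] {V : Type*} [AddCommGroup V] [Module F V]

/-- A subspace is totally singular if the quadratic form vanishes on it. -/
def IsTotallySingular (Q : QuadraticForm F V) (W : Submodule F V) : Prop :=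
  ∀ x ∈ W, Q x = 0

/-- The Witt index: maximal dimension of a totally singular subspace. -/
noncomputable def wittIndex (Q : QuadraticForm F V) : ℕ :=
  sSup {n : ℕ | ∃ W : Submodule F V, IsTotallySingular Q W ∧ Module.finrank F ↥W = n}

/-- Nondegeneracy: the only singular vector orthogonal to everything is `0`. -/
def QuadNondeg (Q : QuadraticForm F V) : Prop :=
  ∀ v : V, Q v = 0 → (∀ x : V, QuadraticMap.polar Q v x = 0) → v = 0

/-- A generator: totally singular subspace of dimension the Witt index. -/
def IsGenerator (Q : QuadraticForm F V) (G : Submodule F V) : Prop :=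
  IsTotallySingular Q G ∧ Module.finrank F ↥G = wittIndex Q

/-- A spread of `Q`. -/
def IsSpread (Q : QuadraticForm F V) (S : Set (Submodule F V)) : Prop :=
  (∀ G ∈ S, IsGenerator Q G) ∧
  (∀ G ∈ S, ∀ G' ∈ S, G ≠ G' → G ⊓ G' = ⊥) ∧
  (∀ v : V, Q v = 0 → ∃ G ∈ S, v ∈ G)

/-- The perp of a vector with respect to the polar form of `Q`. -/
def vecPerp (Q : QuadraticForm F V) (u : V) : Submodule F V :=
  LinearMap.ker (QuadraticMap.polarBilin Q u)

/-- The perp of a subspace with respect to the polar form of `Q`. -/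
def subPerp (Q : QuadraticForm F V) (G : Submodule F V) : Submodule F V :=
  ⨅ g ∈ G, vecPerp Q g

/-- Hyperbolic (e = 0), parabolic (e = 1) or elliptic (e = 2) affine vector space
partition for `(U, H, Q, Pgen)`. -/
def IsAvsp [Fintype F] (e r : ℕ) {U : Type*} [AddCommGroup U] [Module F U]
    (H : Submodule F U) (Q : QuadraticForm F ↥H) (Pgen : Submodule F ↥H)
    (P : Set (Submodule F U)) : Prop :=
  P.ncard = Fintype.card F ^ ((r + e + 1) / 2) ∧
  (∀ S ∈ P, Module.finrank F ↥S = (r + 3 - e) / 2 ∧ ¬ S ≤ H) ∧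
  (∀ L : Submodule F U, Module.finrank F ↥L = 1 → ¬ L ≤ H → ∃! S, S ∈ P ∧ L ≤ S) ∧
  (∀ S ∈ P, IsGenerator Q (S.comap H.subtype) ∧ S.comap H.subtype ⊓ Pgen = ⊥) ∧
  (∀ S ∈ P, ∀ T ∈ P, S ≠ T → S.comap H.subtype ≠ T.comap H.subtype) ∧
  (∀ S ∈ P, ∀ T ∈ P, S ≠ T → Module.finrank F ↥(S ⊓ T) ≤ 1) ∧
  (∀ S ∈ P, ∀ T ∈ P, S ≠ T →
    Module.finrank F ↥(S.comap H.subtype ⊓ T.comap H.subtype) = 1 →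
      QuadNondeg (Q.comp ((S ⊔ T).comap H.subtype).subtype) ∧
      Module.finrank F ↥((S ⊔ T).comap H.subtype) =
        2 * wittIndex (Q.comp ((S ⊔ T).comap H.subtype).subtype))

end Defs

theorem IsTotallySingular.polar_eq_zero {F V : Type*} [Field F] [AddCommGroup V] [Module F V]
    {Q : QuadraticForm F V} {G : Submodule F V} (hG : IsTotallySingular Q G) {x y : V}
    (hx : x ∈ G) (hy : y ∈ G) : QuadraticMap.polar Q x y = 0 := by
  simp [QuadraticMap.polar, hG _ hx, hG _ hy, hG _ (G.add_mem hx hy)]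

/-- A totally singular subspace together with a singular vector orthogonal to it spans a totally
singular subspace. -/
theorem IsTotallySingular.sup_span_singleton {F V : Type*} [Field F] [AddCommGroup V] [Module F V]
    {Q : QuadraticForm F V} {H : Submodule F V} (hH : IsTotallySingular Q H) {y : V}
    (hy : Q y = 0) (hHy : ∀ h ∈ H, QuadraticMap.polar Q y h = 0) :
    IsTotallySingular Q (H ⊔ span F {y}) := by
  intro v hv
  obtain ⟨h, hh, z, hz, rfl⟩ := mem_sup.mp hv
  obtain ⟨a, rfl⟩ := mem_span_singleton.mp hz
  rw [QuadraticMap.map_add Q, hH h hh, QuadraticMap.map_smul, hy, QuadraticMap.polar_smul_right,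
    QuadraticMap.polar_comm, hHy h hh]
  simp

theorem further_generator_in_span {F : Type*} [Field F] [Fintype F]
    (V : Type*) [AddCommGroup V] [Module F V] [FiniteDimensional F V]
    (Q : QuadraticForm F V) (hQnd : QuadNondeg Q)
    (G : Submodule F V) (hG : IsGenerator Q G)
    (X : Submodule F V) (hGX : G ≤ X)
    (hXdim : Module.finrank F ↥X = wittIndex Q + 1)
    (hXperp : ¬ X ≤ subPerp Q G) :
    ∃ G' : Submodule F V, IsGenerator Q G' ∧ G' ≠ G ∧ G' ≤ X := by
  obtain ⟨x, hxX, hx⟩ := SetLike.not_le_iff_exists.mp hXperp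
  obtain ⟨g, hg, hgx⟩ : ∃ g ∈ G, QuadraticMap.polar Q g x ≠ 0 := by
    by_contra! h
    exact hx (by simpa [subPerp, vecPerp, mem_iInf] using h)
  obtain ⟨y, hyX, hy, hgy⟩ : ∃ y ∈ X, Q y = 0 ∧ QuadraticMap.polar Q y g ≠ 0 := by
    refine ⟨x + (-(Q x / QuadraticMap.polar Q g x)) • g,
      X.add_mem hxX (X.smul_mem _ (hGX hg)), ?_, ?_⟩
    · rw [QuadraticMap.map_add Q, QuadraticMap.map_smul, hG.1 g hg, QuadraticMap.polar_smul_right,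
        QuadraticMap.polar_comm Q x g, smul_eq_mul, smul_eq_mul]
      field_simp
      ring
    · rw [QuadraticMap.polar_add_left, QuadraticMap.polar_smul_left, hG.1.polar_eq_zero hg hg,
        QuadraticMap.polar_comm Q x g]
      simpa using hgx
  have hyG : y ∉ G := fun h => hgy (hG.1.polar_eq_zero h hg)
  let f : Module.Dual F G := (QuadraticMap.polarBilin Q y).comp G.subtype
  have hf : f ≠ 0 := fun h => hgy (by simpa [f] using LinearMap.congr_fun h ⟨g, hg⟩)
  let H : Submodule F V := (LinearMap.ker f).map G.subtype
  have hHG : H ≤ G := map_subtype_le _ _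
  have hHy : ∀ h ∈ H, QuadraticMap.polar Q y h = 0 := by
    rintro _ ⟨h, hh, rfl⟩
    simpa [f] using hh
  have hdim : finrank F H + 1 = finrank F G := by
    rw [finrank_map_subtype_eq]
    exact Module.Dual.finrank_ker_add_one_of_ne_zero hf
  have hy0 : y ≠ 0 := fun h => hyG (h ▸ G.zero_mem)
  have hinf : H ⊓ span F {y} = ⊥ :=
    disjoint_iff.mp ((disjoint_span_singleton' hy0).mpr fun h => hyG (hHG h))
  have hsup := finrank_sup_add_finrank_inf_eq H (span F {y})
  rw [hinf, finrank_bot, finrank_span_singleton hy0, hdim, hG.2, add_zero] at hsup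
  refine ⟨H ⊔ span F {y}, ⟨?_, hsup⟩, ?_, ?_⟩
  · exact IsTotallySingular.sup_span_singleton (fun v hv => hG.1 v (hHG hv)) hy hHy
  · exact fun h => hyG (h ▸ mem_sup_right (mem_span_singleton_self y))
  · exact sup_le (hHG.trans hGX) ((span_singleton_le_iff_mem _ _).mpr hyX)
end

section
/- Let e ∈ {1,2} and let r be a positive integer with r ≡ e+1 (mod 2). Let V be an F-vector space of dimension r+3 and Q a nondegenerate quadratic form on V of Witt defect e. Let S be a spread of Q and let W be a hyperplane of V such that the restriction of Q to W is a nondegenerate quadratic form of Witt defect e−1. Then at most q+1 members of S are contained in W. -/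
open Module Submodule

open Finset in
/-- All fibers of a nonzero linear functional on a finite space have the same size. -/
theorem card_fiber_mul_card {F : Type*} [Field F] [Fintype F] {G : Type*} [AddCommGroup G]
    [Module F G] [Fintype G] [DecidableEq F] (f : G →ₗ[F] F) (hf : f ≠ 0) (c : F) :
    #{g | f g = c} * Fintype.card F = Fintype.card G := by
  have hsurj : Function.Surjective f := LinearMap.surjective hf
  have h := Finset.card_eq_sum_card_fiberwise (f := f) (s := univ) (t := univ)
    (fun _ _ => by simp)
  rw [Finset.card_univ] at h
  rw [h, Finset.sum_congr rfl (g := fun _ => #{g | f g = c}), Finset.sum_const, Finset.card_univ,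
    smul_eq_mul, mul_comm]
  intro d _
  exact AddMonoidHom.card_fiber_eq_of_mem_range f.toAddMonoidHom (hsurj d) (hsurj c)

/-- The restriction to `G` of the functional `polar Q v`, as a linear function of `v`. -/
def polarRestrict {F : Type*} [Field F] {V : Type*} [AddCommGroup V] [Module F V]
    (Q : QuadraticForm F V) (G : Submodule F V) : V →ₗ[F] Dual F G :=
  G.subtype.dualMap ∘ₗ Q.polarBilin

theorem polarRestrict_apply {F : Type*} [Field F] {V : Type*} [AddCommGroup V] [Module F V]
    {Q : QuadraticForm F V} (G : Submodule F V) (v : V) (g : G) :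
    polarRestrict Q G v g = QuadraticMap.polar Q v g := rfl

section WittIndex

variable {F : Type*} [Field F] {V : Type*} [AddCommGroup V] [Module F V] [FiniteDimensional F V]
  (Q : QuadraticForm F V)

theorem bddAbove_finrank_isTotallySingular :
    BddAbove {n : ℕ | ∃ W : Submodule F V, IsTotallySingular Q W ∧ finrank F W = n} := by
  refine ⟨finrank F V, ?_⟩
  rintro n ⟨W, -, rfl⟩
  exact W.finrank_le

variable {Q} in
theorem IsTotallySingular.finrank_le_wittIndex {W : Submodule F V} (h : IsTotallySingular Q W) :
    finrank F W ≤ wittIndex Q :=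
  le_csSup (bddAbove_finrank_isTotallySingular Q) ⟨W, h, rfl⟩

theorem exists_isGenerator : ∃ G : Submodule F V, IsGenerator Q G := by
  refine Nat.sSup_mem (s := {n | ∃ W : Submodule F V, IsTotallySingular Q W ∧ finrank F W = n})
    ⟨0, ⊥, fun x hx => ?_, finrank_bot F V⟩ (bddAbove_finrank_isTotallySingular Q)
  rw [(Submodule.mem_bot F).1 hx, QuadraticMap.map_zero]

variable {Q}

/-- A singular vector orthogonal to a generator lies in it. -/
theorem IsGenerator.mem_of_polar_eq_zero {G : Submodule F V} (hG : IsGenerator Q G) {v : V}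
    (hv : Q v = 0) (hperp : ∀ g ∈ G, QuadraticMap.polar Q v g = 0) : v ∈ G := by
  have hts : IsTotallySingular Q (G ⊔ F ∙ v) := by
    intro x hx
    obtain ⟨g, hg, y, hy, rfl⟩ := Submodule.mem_sup.1 hx
    obtain ⟨c, rfl⟩ := Submodule.mem_span_singleton.1 hy
    rw [QuadraticMap.map_add Q, hG.1 g hg, QuadraticMap.map_smul, hv, QuadraticMap.polar_smul_right,
      QuadraticMap.polar_comm, hperp g hg]
    simp
  have hle : finrank F ↥(G ⊔ F ∙ v) ≤ finrank F G := hG.2 ▸ hts.finrank_le_wittIndex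
  rw [Submodule.eq_of_le_of_finrank_le le_sup_left hle]
  exact Submodule.mem_sup_right (Submodule.mem_span_singleton_self v)

theorem finrank_ker_polarRestrict (hQ : QuadNondeg Q) {G : Submodule F V}
    (hG : IsTotallySingular Q G) :
    finrank F G + finrank F (LinearMap.ker (polarRestrict Q G)) = finrank F V := by
  let ψ : G →ₗ[F] Dual F V := Q.polarBilin ∘ₗ G.subtype
  have hψ : Function.Injective ψ := by
    rw [injective_iff_map_eq_zero]
    intro g hg
    exact Subtype.ext (hQ g (hG g g.2) fun x => LinearMap.congr_fun hg x)
  have hsurj : Function.Surjective (polarRestrict Q G) := by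
    have h : polarRestrict Q G = ψ.dualMap ∘ₗ Dual.eval F V := by
      ext v g
      exact QuadraticMap.polar_comm Q v g
    rw [h]
    exact (LinearMap.dualMap_surjective_of_injective hψ).comp (evalEquiv F V).surjective
  have := LinearMap.finrank_range_add_finrank_ker (polarRestrict Q G)
  rwa [LinearMap.range_eq_top.2 hsurj, finrank_top, Subspace.dual_finrank_eq] at this

end WittIndex

open Finset in
/-- The number of singular vectors of a nondegenerate quadratic form over a finite field. -/
theorem card_singular {F : Type*} [Field F] [Fintype F] [DecidableEq F] {V : Type*}
    [AddCommGroup V] [Module F V] [Fintype V] {Q : QuadraticForm F V} (hQ : QuadNondeg Q) :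
    Fintype.card F * #{v | Q v = 0} + Fintype.card F ^ (finrank F V - wittIndex Q) =
      Fintype.card F ^ (wittIndex Q + 1) + Fintype.card F ^ finrank F V := by
  classical
  obtain ⟨G, hG⟩ := exists_isGenerator Q
  set q := Fintype.card F with hq
  set K := LinearMap.ker (polarRestrict Q G) with hK
  have hcG : Fintype.card G = q ^ wittIndex Q := by rw [Module.card_eq_pow_finrank (K := F), hG.2]
  have hdim := finrank_ker_polarRestrict hQ hG.1
  have hcK : #{v | v ∈ K} = q ^ (finrank F V - wittIndex Q) := by
    rw [← Fintype.card_subtype, ← hG.2, ← hdim, Nat.add_sub_cancel_left]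
    exact Module.card_eq_pow_finrank (K := F)
  have hcV : Fintype.card V = q ^ finrank F V := Module.card_eq_pow_finrank
  have hGK : ∀ v ∈ G, v ∈ K := fun v hv => by
    ext g
    rw [polarRestrict_apply, QuadraticMap.polar, hG.1 _ (G.add_mem hv g.2), hG.1 v hv,
      hG.1 g g.2]
    simp
  have hfib : ∀ v, q * #{g : G | Q (v + g) = 0} + (if v ∈ K then Fintype.card G else 0) =
      (if v ∈ G then q * Fintype.card G else 0) + Fintype.card G := by
    intro v
    have hadd : ∀ g : G, Q (v + g) = Q v + polarRestrict Q G v g := fun g => by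
      rw [QuadraticMap.map_add Q, hG.1 g g.2, add_zero, polarRestrict_apply]
    simp only [hadd]
    by_cases hv : v ∈ K
    · have h0 : polarRestrict Q G v = 0 := hv
      simp only [h0, LinearMap.zero_apply, add_zero, hv, if_true]
      by_cases hvG : v ∈ G
      · simp [hvG, hG.1 v hvG]
      · have : Q v ≠ 0 := fun h =>
          hvG (hG.mem_of_polar_eq_zero h fun g hg => LinearMap.congr_fun h0 ⟨g, hg⟩)
        simp [hvG, this]
    · have hvG : v ∉ G := fun h => hv (hGK v h)
      have := card_fiber_mul_card (polarRestrict Q G v) hv (-Q v)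
      simp only [hv, hvG, if_false, add_zero, zero_add]
      rw [← this, mul_comm]
      simp only [add_comm (Q v), ← eq_neg_iff_add_eq_zero, hq]
  have hswap : ∑ v, #{g : G | Q (v + g) = 0} = Fintype.card G * #{v | Q v = 0} := by
    simp only [card_filter]
    rw [sum_comm, ← smul_eq_mul, ← Finset.card_univ, ← sum_const]
    refine sum_congr rfl fun g _ => ?_
    exact Equiv.sum_comp (Equiv.addRight (g : V)) fun v => if Q v = 0 then 1 else 0
  have hsum := Finset.sum_congr (rfl : (univ : Finset V) = univ) fun v _ => hfib v
  rw [sum_add_distrib, sum_add_distrib, ← mul_sum, hswap, ← sum_filter, ← sum_filter, sum_const,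
    sum_const, sum_const, hcK, ← Fintype.card_subtype (· ∈ G), Finset.card_univ, hcV] at hsum
  have hcG' : Fintype.card {x // x ∈ G} = q ^ wittIndex Q := hcG
  rw [hcG'] at hsum
  have hpos : 0 < q ^ wittIndex Q := Nat.pow_pos Fintype.card_pos
  refine Nat.eq_of_mul_eq_mul_left hpos ?_
  simp only [smul_eq_mul] at hsum
  rw [pow_succ]
  linarith

open Finset in
/-- A spread partitions the nonzero singular vectors of any subspace. -/
theorem IsSpread.sum_card {F : Type*} [Field F] [DecidableEq F] {V : Type*}
    [AddCommGroup V] [Module F V] [Fintype V] [DecidableEq V] {Q : QuadraticForm F V}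
    {T : Finset (Submodule F V)} (hT : IsSpread Q (T : Set (Submodule F V)))
    (U : Submodule F V) [DecidablePred (· ∈ U)]
    [∀ G : Submodule F V, DecidablePred (· ∈ G)] :
    ∑ G ∈ T, (#{v | v ∈ G ⊓ U} - 1) = #{v | v ∈ U ∧ Q v = 0} - 1 := by
  have herase : ∀ G : Submodule F V, #{v | v ∈ G ⊓ U} - 1 =
      #(({v | v ∈ G ⊓ U} : Finset V).erase 0) :=
    fun G => (card_erase_of_mem (by simp)).symm
  rw [← card_erase_of_mem (a := 0) (by simp), Finset.sum_congr rfl fun G _ => herase G,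
    ← card_biUnion]
  · congr 1
    ext v
    simp only [mem_biUnion, mem_erase, mem_filter, mem_univ, true_and, Submodule.mem_inf]
    constructor
    · rintro ⟨G, hG, h0, hvG, hvU⟩
      exact ⟨h0, hvU, (hT.1 G hG).1 v hvG⟩
    · rintro ⟨h0, hvU, hv⟩
      obtain ⟨G, hG, hvG⟩ := hT.2.2 v hv
      exact ⟨G, hG, h0, hvG, hvU⟩
  · intro G hG G' hG' hne
    rw [Function.onFun, Finset.disjoint_left]
    intro v hv hv'
    simp only [mem_erase, mem_filter, mem_univ, true_and, Submodule.mem_inf] at hv hv'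
    have : v ∈ G ⊓ G' := ⟨hv.2.1, hv'.2.1⟩
    rw [hT.2.1 G hG G' hG' hne] at this
    exact hv.1 ((Submodule.mem_bot F).1 this)

/-- Solves the linear system relating the numbers `a` and `b` of spread members inside and outside
a hyperplane to the numbers of singular vectors. -/
theorem le_of_count {q k d NV NW a b s : ℕ} (hq : 1 < q)
    (hV : q * NV + q ^ (k + d + 2) = q ^ (k + 1 + 1) + q ^ (2 * (k + 1) + (d + 1)))
    (hW : q * NW + q ^ (k + d + 1) = q ^ (k + 1 + 1) + q ^ (2 * (k + 1) + d))
    (hNV : 1 ≤ NV) (hNW : 1 ≤ NW) (hs : s * (q ^ (k + 1) - 1) = NV - 1) (hab : a + b = s)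
    (hle : a * (q ^ (k + 1) - 1) + b * (q ^ k - 1) ≤ NW - 1) : a ≤ q ^ d + 1 := by
  have hpk : 1 ≤ q ^ k := Nat.one_le_pow _ _ hq.le
  have hpk1 : 1 ≤ q ^ (k + 1) := Nat.one_le_pow _ _ hq.le
  have hpk' : (1 : ℤ) ≤ q ^ k := mod_cast hpk
  have hpk1' : (1 : ℤ) < q ^ (k + 1) := mod_cast Nat.one_lt_pow (by omega) hq
  subst hab
  zify [hNV, hNW, hpk, hpk1] at hs hle hV hW hq ⊢
  rw [pow_succ] at hpk1' hs hle
  have hV' : (q : ℤ) * NV + q ^ k * q ^ d * q ^ 2 =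
      q ^ k * q ^ 2 + (q ^ k) ^ 2 * q ^ d * q ^ 3 := by
    linear_combination hV
  have hW'' : (q : ℤ) * NW + q ^ k * q ^ d * q = q ^ k * q ^ 2 + (q ^ k) ^ 2 * q ^ d * q ^ 2 := by
    linear_combination hW
  generalize (q : ℤ) ^ k = Q at *
  generalize (q : ℤ) ^ d = t at *
  generalize (q : ℤ) = p at *
  have hp0 : p ≠ 0 := by omega
  have hNVe : (NV : ℤ) = Q * p + Q ^ 2 * t * p ^ 2 - Q * t * p :=
    mul_left_cancel₀ hp0 (by linear_combination hV')
  have hNWe : (NW : ℤ) = Q * p + Q ^ 2 * t * p - Q * t :=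
    mul_left_cancel₀ hp0 (by linear_combination hW'')
  have hs' : (a + b : ℤ) = 1 + Q * p * t := by
    refine mul_right_cancel₀ (b := Q * p - 1) (by omega) ?_
    rw [hs, hNVe]
    ring
  have hpos : 0 < Q * (p - 1) := mul_pos (by omega) (by omega)
  refine le_of_mul_le_mul_right (a := Q * (p - 1)) ?_ hpos
  rw [hNWe] at hle
  have hb : (b : ℤ) = 1 + Q * p * t - a := by linear_combination hs'
  rw [hb] at hle
  linarith

theorem lemma_aux1 {F : Type*} [Field F] [Fintype F] (e r : ℕ)
    (he : e = 1 ∨ e = 2) (hr : 0 < r) (hmod : r % 2 = (e + 1) % 2)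
    (V : Type*) [AddCommGroup V] [Module F V] [FiniteDimensional F V]
    (hdim : Module.finrank F V = r + 3)
    (Q : QuadraticForm F V) (hQnd : QuadNondeg Q)
    (hdef : Module.finrank F V = 2 * wittIndex Q + e)
    (S : Set (Submodule F V)) (hS : IsSpread Q S)
    (W : Submodule F V) (hW : Module.finrank F ↥W = r + 2)
    (hWnd : QuadNondeg (Q.comp W.subtype))
    (hWdef : Module.finrank F ↥W = 2 * wittIndex (Q.comp W.subtype) + (e - 1)) :
    {G ∈ S | G ≤ W}.ncard ≤ Fintype.card F + 1 := by
  classical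
  have : Finite V := Module.finite_of_finite F
  have := Fintype.ofFinite V
  obtain ⟨T, rfl⟩ := S.toFinite.exists_finset_coe
  obtain ⟨k, hk⟩ : ∃ k, wittIndex Q = k + 1 := Nat.exists_eq_succ_of_ne_zero (by omega)
  have hkW : wittIndex (Q.comp W.subtype) = k + 1 := by omega
  obtain ⟨d, rfl⟩ : ∃ d, e = d + 1 := Nat.exists_eq_succ_of_ne_zero (by omega)
  have hq : 1 < Fintype.card F := Fintype.one_lt_card
  have hV := card_singular hQnd
  have hW' := card_singular hWnd
  rw [hdef, hk, show 2 * (k + 1) + (d + 1) - (k + 1) = k + d + 2 by omega] at hV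
  rw [hWdef, hkW, show 2 * (k + 1) + (d + 1 - 1) - (k + 1) = k + d + 1 by omega,
    Nat.add_sub_cancel] at hW'
  have hWcard : Finset.card {v : W | Q.comp W.subtype v = 0} =
      Finset.card {v | v ∈ W ∧ Q v = 0} := by
    rw [← Fintype.card_subtype, ← Fintype.card_subtype]
    exact Fintype.card_congr (Equiv.subtypeSubtypeEquivSubtypeInter (· ∈ W) fun v => Q v = 0)
  rw [hWcard] at hW'
  have hcard : ∀ U : Submodule F V, Finset.card {v | v ∈ U} = Fintype.card F ^ finrank F U := by
    intro U
    rw [← Fintype.card_subtype]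
    exact Module.card_eq_pow_finrank (K := F)
  have hsumV := hS.sum_card ⊤
  have hsumW := hS.sum_card W
  have hGV : ∀ G ∈ T, Finset.card {v | v ∈ G ⊓ ⊤} - 1 = Fintype.card F ^ (k + 1) - 1 := by
    intro G hG
    rw [inf_top_eq, hcard, (hS.1 G hG).2, hk]
  rw [Finset.sum_congr rfl hGV, Finset.sum_const, smul_eq_mul] at hsumV
  simp only [Submodule.mem_top, true_and] at hsumV
  have hset : {G ∈ (T : Set (Submodule F V)) | G ≤ W} =
      ((T.filter (· ≤ W) : Finset _) : Set _) := by
    ext G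
    simp
  rw [hset, Set.ncard_coe_finset]
  rw [← Finset.sum_filter_add_sum_filter_not T (· ≤ W)] at hsumW
  have h1 : Finset.card (T.filter (· ≤ W)) * (Fintype.card F ^ (k + 1) - 1) ≤
      ∑ G ∈ T.filter (· ≤ W), (Finset.card {v | v ∈ G ⊓ W} - 1) := by
    rw [← smul_eq_mul, ← Finset.sum_const]
    refine Finset.sum_le_sum fun G hG => ?_
    rw [Finset.mem_filter] at hG
    rw [inf_eq_left.2 hG.2, hcard, (hS.1 G hG.1).2, hk]
  have h2 : Finset.card (T.filter (¬ · ≤ W)) * (Fintype.card F ^ k - 1) ≤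
      ∑ G ∈ T.filter (¬ · ≤ W), (Finset.card {v | v ∈ G ⊓ W} - 1) := by
    rw [← smul_eq_mul, ← Finset.sum_const]
    refine Finset.sum_le_sum fun G hG => ?_
    rw [Finset.mem_filter] at hG
    rw [hcard]
    refine Nat.sub_le_sub_right (Nat.pow_le_pow_right hq.le ?_) 1
    have hfin := Submodule.finrank_sup_add_finrank_inf_eq G W
    have hle := (G ⊔ W).finrank_le
    have hfG := (hS.1 G hG.1).2
    omega
  have hsplit := T.card_filter_add_card_filter_not (· ≤ W)
  have hNV : 1 ≤ Finset.card {v | Q v = 0} := Finset.card_pos.2 ⟨0, by simp⟩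
  have hNW : 1 ≤ Finset.card {v | v ∈ W ∧ Q v = 0} := Finset.card_pos.2 ⟨0, by simp⟩
  have hd : Fintype.card F ^ d ≤ Fintype.card F := by
    conv_rhs => rw [← pow_one (Fintype.card F)]
    exact Nat.pow_le_pow_right hq.le (by omega)
  refine le_trans ?_ (Nat.add_le_add_right hd 1)
  have hWle := (Nat.add_le_add h1 h2).trans hsumW.le
  exact le_of_count hq hV hW' hNV hNW hsumV hsplit hWle
end

section
/- Let r be a positive even integer. Let V be an F-vector space of dimension r+3 and Q a nondegenerate quadratic form on V of Witt defect 1 (a parabolic quadric). Let S be a spread of Q and let W be a hyperplane of V such that the restriction of Q to W is a nondegenerate quadratic form of Witt defect 0 (a hyperbolic hyperplane section). Then exactly 2 members of S are contained in W. -/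
open Module Submodule

theorem bddAbove_finrank_totallySingular {F V : Type*} [Field F] [AddCommGroup V] [Module F V]
    [FiniteDimensional F V] (Q : QuadraticForm F V) :
    BddAbove {n : ℕ | ∃ W : Submodule F V, IsTotallySingular Q W ∧ finrank F ↥W = n} := by
  refine ⟨finrank F V, ?_⟩
  rintro n ⟨W, -, rfl⟩
  exact W.finrank_le

theorem exists_isGenerator_s9 {F V : Type*} [Field F] [AddCommGroup V] [Module F V]
    [FiniteDimensional F V] (Q : QuadraticForm F V) : ∃ U, IsGenerator Q U := by
  have hne : {n : ℕ | ∃ W : Submodule F V, IsTotallySingular Q W ∧ finrank F ↥W = n}.Nonempty :=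
    ⟨0, ⊥, by rintro x hx; rw [(Submodule.mem_bot F).1 hx, map_zero], finrank_bot F V⟩
  exact Nat.sSup_mem hne (bddAbove_finrank_totallySingular Q)

/-- A generator is a maximal totally singular subspace: it contains every singular vector
orthogonal to it. -/
theorem IsGenerator.mem_of_orthogonal {F V : Type*} [Field F] [AddCommGroup V] [Module F V]
    [FiniteDimensional F V] {Q : QuadraticForm F V} {U : Submodule F V} (hU : IsGenerator Q U)
    {v : V} (hv : Q v = 0) (hvU : ∀ u ∈ U, QuadraticMap.polar Q u v = 0) : v ∈ U := by
  have hts : IsTotallySingular Q (U ⊔ F ∙ v) := by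
    intro x hx
    obtain ⟨u, hu, y, hy, rfl⟩ := Submodule.mem_sup.1 hx
    obtain ⟨c, rfl⟩ := Submodule.mem_span_singleton.1 hy
    rw [QuadraticMap.map_add Q, QuadraticMap.polar_smul_right, hvU u hu, hU.1 u hu,
      QuadraticMap.map_smul, hv]
    simp
  have hle : finrank F ↥(U ⊔ F ∙ v) ≤ finrank F U := by
    rw [hU.2]
    exact le_csSup (bddAbove_finrank_totallySingular Q) ⟨_, hts, rfl⟩
  rw [Submodule.eq_of_le_of_finrank_le le_sup_left hle]
  exact Submodule.mem_sup_right (Submodule.mem_span_singleton_self v)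

theorem finrank_add_finrank_orthogonal_of_totallySingular {F V : Type*} [Field F]
    [AddCommGroup V] [Module F V] [FiniteDimensional F V] {Q : QuadraticForm F V}
    (hQ : QuadNondeg Q) {U : Submodule F V} (hU : IsTotallySingular Q U) :
    finrank F U + finrank F (LinearMap.BilinForm.orthogonal Q.polarBilin U) = finrank F V := by
  have hrefl : LinearMap.IsRefl Q.polarBilin := by
    intro x y h
    simpa [QuadraticMap.polar_comm] using h
  rw [LinearMap.BilinForm.finrank_add_finrank_orthogonal hrefl]
  have : U ⊓ LinearMap.BilinForm.orthogonal Q.polarBilin ⊤ = ⊥ := by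
    rw [eq_bot_iff]
    rintro x ⟨hxU, hx⟩
    refine (Submodule.mem_bot F).2 (hQ x (hU x hxU) fun y => ?_)
    rw [QuadraticMap.polar_comm]
    exact hx y trivial
  rw [this, finrank_bot, add_zero]

theorem card_mul_card_fiber_dual {F U : Type*} [Field F] [Fintype F] [AddCommGroup U] [Module F U]
    [Finite U] {f : U →ₗ[F] F} (hf : f ≠ 0) (c : F) :
    Fintype.card F * Nat.card {u // f u = c} = Nat.card U := by
  have hsurj : Function.Surjective f := LinearMap.surjective hf
  obtain ⟨u₀, hu₀⟩ := hsurj c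
  have e : {u // f u = c} ≃ LinearMap.ker f :=
    { toFun := fun u => ⟨u.1 - u₀, by simp [u.2, hu₀]⟩
      invFun := fun u => ⟨u.1 + u₀, by simp [hu₀]⟩
      left_inv := fun u => by simp
      right_inv := fun u => by simp }
  rw [Nat.card_congr e, Submodule.card_eq_card_quotient_mul_card (LinearMap.ker f),
    Nat.card_congr (f.quotKerEquivOfSurjective hsurj).toEquiv, mul_comm,
    Nat.card_eq_fintype_card (α := F)]

/-- The number of singular vectors of a nondegenerate quadratic form. -/
theorem card_mul_card_singular {F V : Type*} [Field F] [Fintype F] [AddCommGroup V] [Module F V]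
    [FiniteDimensional F V] {Q : QuadraticForm F V} (hQ : QuadNondeg Q) :
    Fintype.card F * Nat.card {v // Q v = 0} + Fintype.card F ^ (finrank F V - wittIndex Q) =
      Fintype.card F ^ (wittIndex Q + 1) + Fintype.card F ^ finrank F V := by
  classical
  obtain ⟨U, hU⟩ := exists_isGenerator_s9 Q
  have : Finite V := Module.finite_of_finite F
  have := Fintype.ofFinite V
  set P := LinearMap.BilinForm.orthogonal Q.polarBilin U with hP
  have hmemP (v : V) : v ∈ P ↔ ∀ u ∈ U, QuadraticMap.polar Q u v = 0 := Iff.rfl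
  have hdim := finrank_add_finrank_orthogonal_of_totallySingular hQ hU.1
  rw [← hP, hU.2] at hdim
  have hcU : Nat.card U = Fintype.card F ^ wittIndex Q := by
    rw [Module.natCard_eq_pow_finrank (K := F), hU.2, Nat.card_eq_fintype_card]
  have hcP : Nat.card P = Fintype.card F ^ (finrank F V - wittIndex Q) := by
    rw [Module.natCard_eq_pow_finrank (K := F), Nat.card_eq_fintype_card]
    congr 1; omega
  have hcV : Nat.card V = Fintype.card F ^ finrank F V := by
    rw [Module.natCard_eq_pow_finrank (K := F), Nat.card_eq_fintype_card]
  -- count the pairs `(v, u)` with `u ∈ U` and `v + u` singular in two ways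
  have hleft : Nat.card {p : V × U // Q (p.1 + p.2) = 0} =
      Nat.card {v // Q v = 0} * Nat.card U := by
    rw [← Nat.card_prod]
    exact Nat.card_congr
      { toFun := fun p => (⟨p.1.1 + p.1.2, p.2⟩, p.1.2)
        invFun := fun p => ⟨(p.1.1 - p.2, p.2), by simpa using p.1.2⟩
        left_inv := fun p => by simp
        right_inv := fun p => by simp }
  have hright : Nat.card {p : V × U // Q (p.1 + p.2) = 0} =
      ∑ v : V, Nat.card {u : U // Q (v + u) = 0} := by
    rw [← Nat.card_sigma]
    exact Nat.card_congr
      { toFun := fun p => ⟨p.1.1, p.1.2, p.2⟩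
        invFun := fun p => ⟨(p.1, p.2.1), p.2.2⟩
        left_inv := fun p => rfl
        right_inv := fun p => rfl }
  have hfib (v : V) : Fintype.card F * Nat.card {u : U // Q (v + u) = 0} +
      (if v ∈ P then Nat.card U else 0) =
      Nat.card U + (if v ∈ U then Fintype.card F * Nat.card U else 0) := by
    by_cases hv : v ∈ P
    · have hval (u : U) : Q (v + u) = Q v := by
        rw [QuadraticMap.map_add Q, hU.1 u u.2, QuadraticMap.polar_comm, (hmemP v).1 hv u u.2]
        simp
      by_cases hvU : v ∈ U
      · simp [hv, hvU, hval, hU.1 v hvU]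
        ring
      · have : Q v ≠ 0 := fun h => hvU (hU.mem_of_orthogonal h ((hmemP v).1 hv))
        simp [hv, hvU, hval, this]
    · have hvU : v ∉ U := by
        refine fun h => hv ((hmemP v).2 fun u hu => ?_)
        simp [QuadraticMap.polar, hU.1 _ (U.add_mem hu h), hU.1 u hu, hU.1 v h]
      have hf : (Q.polarBilin v).comp U.subtype ≠ 0 := by
        refine fun h => hv ((hmemP v).2 fun u hu => ?_)
        rw [QuadraticMap.polar_comm]
        exact LinearMap.congr_fun h ⟨u, hu⟩
      have hval (u : U) : Q (v + u) = 0 ↔ (Q.polarBilin v).comp U.subtype u = - Q v := by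
        rw [QuadraticMap.map_add Q, hU.1 u u.2, add_zero, add_comm, ← eq_neg_iff_add_eq_zero]
        rfl
      simp only [hv, hvU, hval, if_false, add_zero]
      exact card_mul_card_fiber_dual hf _
  have hsum := Finset.sum_congr (rfl : (Finset.univ : Finset V) = _) fun v _ => hfib v
  have hcard (A : Submodule F V) (k : ℕ) :
      ∑ v : V, (if v ∈ A then k else 0) = Nat.card A * k := by
    rw [← Finset.sum_filter, Finset.sum_const, smul_eq_mul, ← Fintype.card_subtype,
      ← Nat.card_eq_fintype_card]
  rw [Finset.sum_add_distrib, Finset.sum_add_distrib, hcard, hcard, ← Finset.mul_sum, ← hright,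
    hleft, Finset.sum_const, Finset.card_univ, smul_eq_mul, ← Nat.card_eq_fintype_card (α := V),
    hcV, hcP, hcU] at hsum
  have hq : 0 < Fintype.card F ^ wittIndex Q := pow_pos Fintype.card_pos _
  refine Nat.eq_of_mul_eq_mul_right hq ?_
  rw [pow_succ]
  linarith

/-- Counting the singular vectors of a subspace along a spread. -/
theorem IsSpread.card_singular_add_card {F V : Type*} [Field F] [Fintype F] [AddCommGroup V]
    [Module F V] [FiniteDimensional F V] {Q : QuadraticForm F V} {S : Finset (Submodule F V)}
    (hS : IsSpread Q (S : Set (Submodule F V))) (W : Submodule F V) :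
    Nat.card {w : W // Q w = 0} + S.card =
      1 + ∑ G ∈ S, Fintype.card F ^ finrank F ↥(G ⊓ W) := by
  classical
  have : Finite V := Module.finite_of_finite F
  have := Fintype.ofFinite V
  obtain ⟨hgen, hdisj, hcov⟩ := hS
  have hG (G : Submodule F V) :
      (Finset.univ.filter fun v => v ∈ G ⊓ W ∧ v ≠ 0).card + 1 =
        Fintype.card F ^ finrank F ↥(G ⊓ W) := by
    rw [← Nat.card_eq_fintype_card, ← Module.natCard_eq_pow_finrank (K := F),
      Nat.card_eq_fintype_card, Fintype.card_subtype, ← Finset.filter_filter,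
      Finset.filter_ne', Finset.card_erase_add_one (by simp)]
  have hN : (Finset.univ.filter fun v => (v ∈ W ∧ Q v = 0) ∧ v ≠ 0).card + 1 =
      Nat.card {w : W // Q w = 0} := by
    rw [← Finset.filter_filter, Finset.filter_ne', Finset.card_erase_add_one (by simp),
      ← Fintype.card_subtype, ← Nat.card_eq_fintype_card]
    exact Nat.card_congr (Equiv.subtypeSubtypeEquivSubtypeInter _ _).symm
  have hunion : (Finset.univ.filter fun v => (v ∈ W ∧ Q v = 0) ∧ v ≠ 0) =
      S.biUnion fun G => Finset.univ.filter fun v => v ∈ G ⊓ W ∧ v ≠ 0 := by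
    ext v
    simp only [Finset.mem_filter, Finset.mem_univ, true_and, Finset.mem_biUnion, Submodule.mem_inf]
    constructor
    · rintro ⟨⟨hW, hv⟩, h0⟩
      obtain ⟨G, hGS, hvG⟩ := hcov v hv
      exact ⟨G, hGS, ⟨hvG, hW⟩, h0⟩
    · rintro ⟨G, hGS, ⟨hvG, hW⟩, h0⟩
      exact ⟨⟨hW, (hgen G hGS).1 v hvG⟩, h0⟩
  rw [← hN, hunion, Finset.card_biUnion, ← Finset.sum_congr rfl fun G _ => hG G,
    Finset.sum_add_distrib]
  · simp only [Finset.sum_const, smul_eq_mul, mul_one]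
    ring
  · intro G hG G' hG' hne
    refine Finset.disjoint_left.2 fun v hv hv' => ?_
    simp only [Finset.mem_filter, Finset.mem_univ, true_and, Submodule.mem_inf] at hv hv'
    have : v ∈ G ⊓ G' := ⟨hv.1.1, hv'.1.1⟩
    rw [hdisj G hG G' hG' hne] at this
    exact hv.2 ((Submodule.mem_bot F).1 this)

theorem finrank_inf_hyperplane {F V : Type*} [Field F] [AddCommGroup V] [Module F V]
    [FiniteDimensional F V] {G W : Submodule F V} (hW : finrank F W + 1 = finrank F V)
    (hG : ¬ G ≤ W) : finrank F ↥(G ⊓ W) + 1 = finrank F G := by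
  have h := Submodule.finrank_sup_add_finrank_inf_eq G W
  have hlt : finrank F W < finrank F ↥(G ⊔ W) :=
    Submodule.finrank_lt_finrank_of_lt
      (lt_of_le_not_ge le_sup_right fun hle => hG (le_sup_left.trans hle))
  have hle := (G ⊔ W).finrank_le
  omega

theorem parabolic_spread_hyperbolic_section {F : Type*} [Field F] [Fintype F] (r : ℕ)
    (hr : 0 < r) (hreven : r % 2 = 0)
    (V : Type*) [AddCommGroup V] [Module F V] [FiniteDimensional F V]
    (hdim : Module.finrank F V = r + 3)
    (Q : QuadraticForm F V) (hQnd : QuadNondeg Q)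
    (hdef : Module.finrank F V = 2 * wittIndex Q + 1)
    (S : Set (Submodule F V)) (hS : IsSpread Q S)
    (W : Submodule F V) (hW : Module.finrank F ↥W = r + 2)
    (hWnd : QuadNondeg (Q.comp W.subtype))
    (hWdef : Module.finrank F ↥W = 2 * wittIndex (Q.comp W.subtype)) :
    {G ∈ S | G ≤ W}.ncard = 2 := by
  classical
  have : Finite V := Module.finite_of_finite F
  have : Finite (Submodule F V) := Finite.of_injective _ (SetLike.coe_injective (A := Submodule F V))
  lift S to Finset (Submodule F V) using S.toFinite
  obtain ⟨k, rfl⟩ : ∃ k, r = 2 * k := ⟨r / 2, by omega⟩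
  have hwV : wittIndex Q = k + 1 := by omega
  have hwW : wittIndex (Q.comp W.subtype) = k + 1 := by omega
  have hNV := card_mul_card_singular hQnd
  have hNW := card_mul_card_singular hWnd
  have hcV := hS.card_singular_add_card ⊤
  have hcW := hS.card_singular_add_card W
  have hgen (G) (hG : G ∈ S) : finrank F ↥G = k + 1 := (hS.1 G hG).2.trans hwV
  have htop : Nat.card {w : (⊤ : Submodule F V) // Q w = 0} = Nat.card {v // Q v = 0} :=
    Nat.card_congr (Submodule.topEquiv.toEquiv.subtypeEquiv fun _ => Iff.rfl)
  have hsumV : ∑ G ∈ S, Fintype.card F ^ finrank F ↥(G ⊓ ⊤) =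
      S.card * Fintype.card F ^ (k + 1) := by
    rw [← smul_eq_mul, ← Finset.sum_const]
    exact Finset.sum_congr rfl fun G hG => by rw [inf_top_eq, hgen G hG]
  have hsumW : ∑ G ∈ S, Fintype.card F ^ finrank F ↥(G ⊓ W) =
      (S.filter (· ≤ W)).card * Fintype.card F ^ (k + 1) +
        (S.filter (¬ · ≤ W)).card * Fintype.card F ^ k := by
    rw [← Finset.sum_filter_add_sum_filter_not S (· ≤ W), ← smul_eq_mul, ← smul_eq_mul,
      ← Finset.sum_const, ← Finset.sum_const]
    congr 1
    · refine Finset.sum_congr rfl fun G hG => ?_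
      rw [Finset.mem_filter] at hG
      rw [inf_eq_left.2 hG.2, hgen G hG.1]
    · refine Finset.sum_congr rfl fun G hG => ?_
      rw [Finset.mem_filter] at hG
      have h := finrank_inf_hyperplane (by omega) hG.2
      rw [hgen G hG.1] at h
      rw [Nat.succ_injective h]
  have hsplit := Finset.card_filter_add_card_filter_not (s := S) (· ≤ W)
  have hgoal : {G ∈ (S : Set (Submodule F V)) | G ≤ W}.ncard = (S.filter (· ≤ W)).card := by
    rw [← Set.ncard_coe_finset, Finset.coe_filter]
    rfl
  rw [hgoal]
  rw [hwV, hdim, show 2 * k + 3 - (k + 1) = k + 1 + 1 by omega, ← htop] at hNV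
  rw [hwW, hW, show 2 * k + 2 - (k + 1) = k + 1 by omega] at hNW
  rw [hsumV] at hcV
  rw [hsumW] at hcW
  change _ * Nat.card {w : W // Q w = 0} + _ = _ at hNW
  generalize Nat.card {w : W // Q w = 0} = NW at *
  generalize Nat.card {w : (⊤ : Submodule F V) // Q w = 0} = NV at *
  generalize (S.filter (· ≤ W)).card = a at *
  generalize (S.filter (¬ · ≤ W)).card = b at *
  generalize S.card = s at *
  have hq : 1 < Fintype.card F := Fintype.one_lt_card
  have hp : 0 < Fintype.card F ^ k := pow_pos (by omega) k
  have hp1 : 1 < Fintype.card F ^ (k + 1) := Nat.one_lt_pow (by omega) hq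
  rw [show 2 * k + 3 = k + k + 3 by ring] at hNV
  rw [show 2 * k + 2 = k + k + 2 by ring] at hNW
  simp only [pow_succ, pow_add] at *
  generalize Fintype.card F ^ k = p at *
  generalize Fintype.card F = q at *
  zify at *
  have hq0 : (q : ℤ) ≠ 0 := by omega
  have hNV' : (NV : ℤ) = (p * q) * (p * q) := mul_left_cancel₀ hq0 (by linarith)
  have hNW' : (NW : ℤ) = p * q + p * p * q - p := mul_left_cancel₀ hq0 (by linarith)
  have hs : (s : ℤ) = p * q + 1 :=
    mul_right_cancel₀ (b := (p * q - 1 : ℤ)) (by omega) (by rw [hNV'] at hcV; linarith)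
  refine mul_right_cancel₀ (b := (p * (q - 1) : ℤ)) (mul_ne_zero (by omega) (by omega)) ?_
  have hb : (b : ℤ) = p * q + 1 - a := by omega
  rw [hNW', hs, hb] at hcW
  linarith
end
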